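/- There exists, for every n ≥ 3, a periodic measurement sequence (Floquet code) on some number of qubits whose fully initialized stabilizer group has n independent generators and which requires exactly n−1 cycles to fully initialize: each cycle after the first increases the number of independent stabilizer generators by exactly one. -/

import Mathlib

abbrev PauliVec (n : ℕ) := (Fin n → ZMod 2) × (Fin n → ZMod 2)

def sympl {n : ℕ} (v w : PauliVec n) : ZMod 2 :=
  ∑ i, (v.1 i * w.2 i + v.2 i * w.1 i)

/-- The symplectic product with a fixed `m`, as a linear map. -/
def symplMap {n : ℕ} (m : PauliVec n) : PauliVec n →ₗ[ZMod 2] ZMod 2 where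
  toFun v := sympl v m
  map_add' v w := by
    simp only [sympl, Prod.fst_add, Prod.snd_add, Pi.add_apply]
    rw [← Finset.sum_add_distrib]
    exact Finset.sum_congr rfl fun i _ => by ring
  map_smul' c v := by
    simp only [sympl, Prod.smul_fst, Prod.smul_snd, Pi.smul_apply, smul_eq_mul,
      RingHom.id_apply, Finset.mul_sum]
    exact Finset.sum_congr rfl fun i _ => by ring

/-- The symplectic complement of a single Pauli `m` (operators commuting with it). -/
def perp {n : ℕ} (m : PauliVec n) : Submodule (ZMod 2) (PauliVec n) :=
  LinearMap.ker (symplMap m)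

open Submodule in
/-- Update of an instantaneous stabilizer group under measurement of the Pauli `m`:
the commuting part of `S` survives and `m` is adjoined.  This simultaneously
covers all three stabilizer update rules. -/
def measUpdate {n : ℕ} (S : Submodule (ZMod 2) (PauliVec n)) (m : PauliVec n) :
    Submodule (ZMod 2) (PauliVec n) :=
  (S ⊓ perp m) ⊔ span (ZMod 2) {m}

/-- Run a sequence of measurements starting from the stabilizer group `S`. -/
def runSeq {n : ℕ} (ms : List (PauliVec n)) (S : Submodule (ZMod 2) (PauliVec n)) :
    Submodule (ZMod 2) (PauliVec n) :=
  ms.foldl measUpdate S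

/-- The instantaneous stabilizer group after `j` complete cycles of the periodic
measurement sequence `M`, starting from the trivial stabilizer group. -/
def cycISG {n : ℕ} (M : List (PauliVec n)) (j : ℕ) :
    Submodule (ZMod 2) (PauliVec n) :=
  runSeq ((List.replicate j M).flatten) ⊥

/-!
Let `d i` be destabilizers for the stabilizers `s i`. If `s i` is in the stabilizer group, then
measuring `d i * d k` and then `s k` exchanges the sites `i` and `k`: an `s k` that is absent
replaces `s i`, while if both are present then `s i * s k` survives the first measurement and the
second recovers `s i` from it. Moving `s a` in this way along a path through all sites applies a
full cycle `σ` to the set of sites whose generator is present, and measuring `s a` again fills the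
site `a`. The sites present after `j ≥ 1` periods are therefore `a, σ a, …, σ^j a`, which gains
exactly one site per period until all sites are present.
-/

theorem span_singleton_add_sup_span_singleton {R M : Type*} [Ring R] [AddCommGroup M] [Module R M]
    (x y : M) :
    Submodule.span R {x + y} ⊔ Submodule.span R {x} =
      Submodule.span R {y} ⊔ Submodule.span R {x} := by
  simp only [← Submodule.span_insert]
  refine le_antisymm (Submodule.span_le.2 ?_) (Submodule.span_le.2 ?_) <;>
    simp only [Set.insert_subset_iff, Set.singleton_subset_iff, SetLike.mem_coe,
      Submodule.mem_span_pair]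
  · exact ⟨⟨1, 1, by simp [add_comm]⟩, 0, 1, by simp⟩
  · exact ⟨⟨1, -1, by simp⟩, 0, 1, by simp⟩

section Measurement

variable {q : ℕ}

theorem mem_perp {m v : PauliVec q} : v ∈ perp m ↔ sympl v m = 0 := Iff.rfl

theorem sympl_comm (v w : PauliVec q) : sympl v w = sympl w v :=
  Finset.sum_congr rfl fun _ _ => by ring

theorem sympl_add_left (u v m : PauliVec q) : sympl (u + v) m = sympl u m + sympl v m :=
  map_add (symplMap m) u v

theorem sympl_add_right (m u v : PauliVec q) : sympl m (u + v) = sympl m u + sympl m v := by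
  simp only [sympl_comm m, sympl_add_left]

theorem measUpdate_of_le_perp {S : Submodule (ZMod 2) (PauliVec q)} {m : PauliVec q}
    (hS : S ≤ perp m) : measUpdate S m = S ⊔ Submodule.span (ZMod 2) {m} := by
  rw [measUpdate, inf_eq_left.2 hS]

theorem measUpdate_sup_span_singleton {A : Submodule (ZMod 2) (PauliVec q)} {a m : PauliVec q}
    (hA : A ≤ perp m) (ham : a ∉ perp m) :
    measUpdate (A ⊔ Submodule.span (ZMod 2) {a}) m = A ⊔ Submodule.span (ZMod 2) {m} := by
  have hdisj : Submodule.span (ZMod 2) {a} ⊓ perp m = ⊥ :=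
    (Submodule.disjoint_span_singleton_of_notMem ham).symm.eq_bot
  rw [measUpdate, sup_inf_assoc_of_le _ hA, hdisj, sup_bot_eq]

theorem runSeq_append (l₁ l₂ : List (PauliVec q)) (S : Submodule (ZMod 2) (PauliVec q)) :
    runSeq (l₁ ++ l₂) S = runSeq l₂ (runSeq l₁ S) :=
  List.foldl_append

theorem cycISG_zero (M : List (PauliVec q)) : cycISG M 0 = ⊥ := rfl

theorem cycISG_succ (M : List (PauliVec q)) (j : ℕ) :
    cycISG M (j + 1) = runSeq M (cycISG M j) := by
  rw [cycISG, List.replicate_succ', List.flatten_append, runSeq_append, List.flatten_singleton,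
    cycISG]

end Measurement

/-- The Paulis `d i` are destabilizers of the mutually commuting stabilizers `s i`: `d i`
anticommutes with `s i` and commutes with every other `s j`. The `d i` need not commute with each
other. -/
structure IsDestabilizer {q : ℕ} {ι : Type*} (s d : ι → PauliVec q) : Prop where
  stabilizer_comm (i j : ι) : sympl (s i) (s j) = 0
  sympl_self (i : ι) : sympl (s i) (d i) = 1
  sympl_of_ne {i j : ι} (hij : i ≠ j) : sympl (s i) (d j) = 0

/-- The stabilizer group generated by the `s i` with `i ∈ I`. -/
def stabGroup {q : ℕ} {ι : Type*} (s : ι → PauliVec q) (I : Set ι) :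
    Submodule (ZMod 2) (PauliVec q) :=
  Submodule.span (ZMod 2) (s '' I)

section StabGroup

variable {q : ℕ} {ι : Type*} (s : ι → PauliVec q)

theorem stabGroup_empty : stabGroup s ∅ = ⊥ := by
  rw [stabGroup, Set.image_empty, Submodule.span_empty]

theorem stabGroup_insert (i : ι) (I : Set ι) :
    stabGroup s (insert i I) = stabGroup s I ⊔ Submodule.span (ZMod 2) {s i} := by
  rw [stabGroup, Set.image_insert_eq, Submodule.span_insert, sup_comm, stabGroup]

variable {s}

theorem stabGroup_mono {I J : Set ι} (hIJ : I ⊆ J) : stabGroup s I ≤ stabGroup s J :=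
  Submodule.span_mono (Set.image_mono hIJ)

theorem stabGroup_le_perp {I : Set ι} {m : PauliVec q} (hI : ∀ i ∈ I, sympl (s i) m = 0) :
    stabGroup s I ≤ perp m :=
  Submodule.span_le.2 (Set.forall_mem_image.2 hI)

end StabGroup

namespace IsDestabilizer

variable {q : ℕ} {ι : Type*} {s d : ι → PauliVec q} {I : Set ι} {i k : ι}

theorem linearIndependent (hsd : IsDestabilizer s d) : LinearIndependent (ZMod 2) s := by
  classical
  let syndrome : PauliVec q →ₗ[ZMod 2] ι → ZMod 2 := LinearMap.pi fun j => symplMap (d j)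
  have syndrome_s : syndrome ∘ s = fun i => Pi.single i 1 := by
    funext i j
    change sympl (s i) (d j) = _
    obtain rfl | hij := eq_or_ne i j
    · rw [hsd.sympl_self, Pi.single_eq_same]
    · rw [hsd.sympl_of_ne hij, Pi.single_eq_of_ne hij.symm]
  refine LinearIndependent.of_comp syndrome ?_
  rw [syndrome_s]
  exact Pi.linearIndependent_single_one ι (ZMod 2)

theorem finrank_stabGroup (hsd : IsDestabilizer s d) (I : Set ι) :
    Module.finrank (ZMod 2) (stabGroup s I) = I.ncard := by
  rw [Module.finrank, ← Cardinal.toNat_toENat, stabGroup,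
    toENat_rank_span_set (hsd.linearIndependent.linearIndepOn I), Set.ncard]

theorem stabGroup_le_perp_stabilizer (hsd : IsDestabilizer s d) (I : Set ι) (i : ι) :
    stabGroup s I ≤ perp (s i) :=
  stabGroup_le_perp fun j _ => hsd.stabilizer_comm j i

theorem measUpdate_stabGroup (hsd : IsDestabilizer s d) (I : Set ι) (i : ι) :
    measUpdate (stabGroup s I) (s i) = stabGroup s (insert i I) := by
  rw [measUpdate_of_le_perp (hsd.stabGroup_le_perp_stabilizer I i), stabGroup_insert]

theorem sympl_add_destabilizer (hsd : IsDestabilizer s d) (hik : i ≠ k) :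
    sympl (s i) (d i + d k) = 1 := by
  rw [sympl_add_right, hsd.sympl_self, hsd.sympl_of_ne hik, add_zero]

theorem runSeq_hop_sup_span (hsd : IsDestabilizer s d) (hik : i ≠ k)
    {A : Submodule (ZMod 2) (PauliVec q)} (hAd : A ≤ perp (d i + d k)) (hAs : A ≤ perp (s k)) :
    runSeq [d i + d k, s k] (A ⊔ Submodule.span (ZMod 2) {s i}) =
      A ⊔ Submodule.span (ZMod 2) {s k} := by
  have hi : s i ∉ perp (d i + d k) := by
    rw [mem_perp, hsd.sympl_add_destabilizer hik]
    exact one_ne_zero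
  have hk : d i + d k ∉ perp (s k) := by
    rw [mem_perp, sympl_comm, add_comm, hsd.sympl_add_destabilizer hik.symm]
    exact one_ne_zero
  change measUpdate (measUpdate _ _) _ = _
  rw [measUpdate_sup_span_singleton hAd hi, measUpdate_sup_span_singleton hAs hk]

theorem stabGroup_le_perp_add_destabilizer (hsd : IsDestabilizer s d) (hi : i ∉ I) (hk : k ∉ I) :
    stabGroup s I ≤ perp (d i + d k) := by
  refine stabGroup_le_perp fun j hj => ?_
  rw [sympl_add_right, hsd.sympl_of_ne (ne_of_mem_of_not_mem hj hi),
    hsd.sympl_of_ne (ne_of_mem_of_not_mem hj hk), add_zero]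

theorem runSeq_hop_of_notMem (hsd : IsDestabilizer s d) (hik : i ≠ k) (hi : i ∉ I) (hk : k ∉ I) :
    runSeq [d i + d k, s k] (stabGroup s (insert i I)) = stabGroup s (insert k I) := by
  rw [stabGroup_insert, stabGroup_insert]
  exact hsd.runSeq_hop_sup_span hik (hsd.stabGroup_le_perp_add_destabilizer hi hk)
    (hsd.stabGroup_le_perp_stabilizer I k)

theorem runSeq_hop_of_mem (hsd : IsDestabilizer s d) (hik : i ≠ k) (hi : i ∉ I) (hk : k ∉ I) :
    runSeq [d i + d k, s k] (stabGroup s (insert i (insert k I))) =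
      stabGroup s (insert i (insert k I)) := by
  let A := stabGroup s I ⊔ Submodule.span (ZMod 2) {s i + s k}
  have hA_i : stabGroup s (insert i (insert k I)) = A ⊔ Submodule.span (ZMod 2) {s i} := by
    rw [stabGroup_insert, stabGroup_insert, sup_assoc, sup_assoc,
      span_singleton_add_sup_span_singleton]
  have hA_k : stabGroup s (insert i (insert k I)) = A ⊔ Submodule.span (ZMod 2) {s k} := by
    rw [Set.insert_comm, stabGroup_insert, stabGroup_insert, sup_assoc, sup_assoc, add_comm,
      span_singleton_add_sup_span_singleton]
  have hAd : A ≤ perp (d i + d k) := by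
    refine sup_le (hsd.stabGroup_le_perp_add_destabilizer hi hk) ?_
    rw [Submodule.span_singleton_le_iff_mem, mem_perp, sympl_add_left,
      hsd.sympl_add_destabilizer hik, add_comm (d i), hsd.sympl_add_destabilizer hik.symm]
    exact CharTwo.add_self_eq_zero 1
  have hAs : A ≤ perp (s k) :=
    (le_sup_left.trans_eq hA_i.symm).trans (hsd.stabGroup_le_perp_stabilizer _ k)
  calc runSeq [d i + d k, s k] (stabGroup s (insert i (insert k I)))
      = runSeq [d i + d k, s k] (A ⊔ Submodule.span (ZMod 2) {s i}) := by rw [hA_i]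
    _ = A ⊔ Submodule.span (ZMod 2) {s k} := hsd.runSeq_hop_sup_span hik hAd hAs
    _ = stabGroup s (insert i (insert k I)) := hA_k.symm

theorem runSeq_hop [DecidableEq ι] (hsd : IsDestabilizer s d) (hik : i ≠ k) (hi : i ∈ I) :
    runSeq [d i + d k, s k] (stabGroup s I) = stabGroup s (Equiv.swap i k '' I) := by
  obtain ⟨J, rfl, hiJ, hkJ⟩ | ⟨J, rfl, hiJ, hkJ⟩ :
      (∃ J, I = insert i J ∧ i ∉ J ∧ k ∉ J) ∨
        ∃ J, I = insert i (insert k J) ∧ i ∉ J ∧ k ∉ J := by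
    by_cases hk : k ∈ I
    · exact .inr ⟨I \ {i, k}, by grind, by grind, by grind⟩
    · exact .inl ⟨I \ {i}, by grind, by grind, by grind⟩
  all_goals
    have hJ : Equiv.swap i k '' J = J := by
      rw [Set.EqOn.image_eq_self]
      exact fun j hj => Equiv.swap_apply_of_ne_of_ne (ne_of_mem_of_not_mem hj hiJ)
        (ne_of_mem_of_not_mem hj hkJ)
  · rw [hsd.runSeq_hop_of_notMem hik hiJ hkJ, Set.image_insert_eq, Equiv.swap_apply_left, hJ]
  · rw [hsd.runSeq_hop_of_mem hik hiJ hkJ, Set.image_insert_eq, Set.image_insert_eq,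
      Equiv.swap_apply_left, Equiv.swap_apply_right, hJ, Set.insert_comm]

end IsDestabilizer

/-- The measurements moving the generator `s i` along a path of sites starting at `i`. A hop from
`i` to `k` measures `d i + d k` and then `s k`, and hands the generator of site `k`, if present,
back to site `i`. -/
def transport {q : ℕ} {ι : Type*} (s d : ι → PauliVec q) : ι → List ι → List (PauliVec q)
  | _, [] => []
  | i, k :: path => [d i + d k, s k] ++ transport s d k path

/-- One period of the slowly initializing code: measure `s a`, move it along `path`, and measure
`s a` again. -/
def slowCycle {q : ℕ} {ι : Type*} (s d : ι → PauliVec q) (a : ι) (path : List ι) :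
    List (PauliVec q) :=
  [s a] ++ transport s d a path ++ [s a]

theorem isCycleOn_univ_inv_formPerm {ι : Type*} [DecidableEq ι] {l : List ι} (hl : l.Nodup)
    (hmem : ∀ i, i ∈ l) : l.formPerm⁻¹.IsCycleOn Set.univ := by
  have hcycle := hl.isCycleOn_formPerm.inv
  rwa [Set.eq_univ_of_forall (s := {i | i ∈ l}) hmem] at hcycle

/-- The first `m` points `a, σ a, …, σ^(m-1) a` of the orbit of `a` under `σ`. -/
def orbitSegment {ι : Type*} (σ : Equiv.Perm ι) (a : ι) (m : ℕ) : Set ι :=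
  (fun i => (σ ^ i) a) '' Set.Iio m

section OrbitSegment

variable {ι : Type*} {σ : Equiv.Perm ι} {a : ι}

theorem insert_image_orbitSegment (σ : Equiv.Perm ι) (a : ι) (m : ℕ) :
    insert a (σ '' orbitSegment σ a m) = orbitSegment σ a (m + 1) := by
  simp only [orbitSegment, Set.image_image, ← Equiv.Perm.mul_apply, ← pow_succ']
  ext x
  simp only [Set.mem_insert_iff, Set.mem_image, Set.mem_Iio, Nat.exists_lt_succ_left, pow_zero,
    Equiv.Perm.one_apply, eq_comm (a := x)]

theorem insert_orbitSegment_succ (σ : Equiv.Perm ι) (a : ι) (m : ℕ) :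
    insert a (orbitSegment σ a (m + 1)) = orbitSegment σ a (m + 1) :=
  Set.insert_eq_of_mem ⟨0, m.succ_pos, rfl⟩

theorem orbitSegment_one (σ : Equiv.Perm ι) (a : ι) : orbitSegment σ a 1 = {a} := by
  ext x
  simp [orbitSegment, eq_comm]

theorem ncard_orbitSegment [Fintype ι] (hσ : σ.IsCycleOn Set.univ) {m : ℕ}
    (hm : m ≤ Fintype.card ι) : (orbitSegment σ a m).ncard = m := by
  rw [← Finset.coe_univ] at hσ
  rw [orbitSegment, Set.InjOn.ncard_image, Set.ncard_Iio_nat]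
  intro i hi j hj hij
  exact ((hσ.pow_apply_eq_pow_apply (Finset.mem_univ a)).1 hij).eq_of_lt_of_lt
    (hi.trans_le hm) (hj.trans_le hm)

theorem orbitSegment_card [Fintype ι] (hσ : σ.IsCycleOn Set.univ) :
    orbitSegment σ a (Fintype.card ι) = Set.univ := by
  refine Set.eq_of_subset_of_ncard_le (Set.subset_univ _) ?_
  rw [ncard_orbitSegment hσ le_rfl, Set.ncard_univ, Nat.card_eq_fintype_card]

end OrbitSegment

namespace IsDestabilizer

variable {q : ℕ} {ι : Type*} {s d : ι → PauliVec q}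

theorem runSeq_transport [DecidableEq ι] (hsd : IsDestabilizer s d) {i : ι} {path : List ι}
    (hpath : (i :: path).Nodup) {I : Set ι} (hi : i ∈ I) :
    runSeq (transport s d i path) (stabGroup s I) =
      stabGroup s (⇑(i :: path).formPerm⁻¹ '' I) := by
  induction path generalizing i I with
  | nil => simp [transport, runSeq]
  | cons k path ih =>
    have hik : i ≠ k := List.ne_of_not_mem_cons hpath.notMem
    have hk : k ∈ Equiv.swap i k '' I := ⟨i, hi, Equiv.swap_apply_left i k⟩
    rw [transport, runSeq_append, hsd.runSeq_hop hik hi, ih hpath.of_cons hk, Set.image_image,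
      List.formPerm_cons_cons, mul_inv_rev, Equiv.swap_inv]
    rfl

theorem runSeq_slowCycle [DecidableEq ι] (hsd : IsDestabilizer s d) {a : ι} {path : List ι}
    (hpath : (a :: path).Nodup) (I : Set ι) :
    runSeq (slowCycle s d a path) (stabGroup s I) =
      stabGroup s (insert a (⇑(a :: path).formPerm⁻¹ '' insert a I)) := by
  have runSeq_singleton (J : Set ι) : runSeq [s a] (stabGroup s J) = stabGroup s (insert a J) :=
    hsd.measUpdate_stabGroup J a
  rw [slowCycle, runSeq_append, runSeq_append, runSeq_singleton,
    hsd.runSeq_transport hpath (Set.mem_insert a I), runSeq_singleton]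

theorem cycISG_slowCycle [DecidableEq ι] (hsd : IsDestabilizer s d) {a : ι} {path : List ι}
    (hpath : (a :: path).Nodup) {j : ℕ} (hj : 1 ≤ j) :
    cycISG (slowCycle s d a path) j =
      stabGroup s (orbitSegment (a :: path).formPerm⁻¹ a (j + 1)) := by
  induction j, hj using Nat.le_induction with
  | base =>
    have insert_empty : insert a ∅ = orbitSegment (a :: path).formPerm⁻¹ a 1 := by
      rw [orbitSegment_one, insert_empty_eq]
    rw [cycISG_succ, cycISG_zero, ← stabGroup_empty s, hsd.runSeq_slowCycle hpath, insert_empty,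
      insert_image_orbitSegment]
  | succ j _ ih =>
    rw [cycISG_succ, ih, hsd.runSeq_slowCycle hpath, insert_orbitSegment_succ,
      insert_image_orbitSegment]

variable [Fintype ι] {a : ι} {path : List ι}

theorem finrank_cycISG_slowCycle (hsd : IsDestabilizer s d) (hpath : (a :: path).Nodup)
    (hmem : ∀ i, i ∈ a :: path) {j : ℕ} (hj : 1 ≤ j) (hj_lt : j < Fintype.card ι) :
    Module.finrank (ZMod 2) (cycISG (slowCycle s d a path) j) = j + 1 := by
  classical
  rw [hsd.cycISG_slowCycle hpath hj, hsd.finrank_stabGroup,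
    ncard_orbitSegment (isCycleOn_univ_inv_formPerm hpath hmem) hj_lt]

theorem cycISG_slowCycle_card_sub_one (hsd : IsDestabilizer s d) (hpath : (a :: path).Nodup)
    (hmem : ∀ i, i ∈ a :: path) (hι : 2 ≤ Fintype.card ι) :
    cycISG (slowCycle s d a path) (Fintype.card ι - 1) = stabGroup s Set.univ := by
  classical
  rw [hsd.cycISG_slowCycle hpath (by lia), Nat.sub_add_cancel (by lia),
    orbitSegment_card (isCycleOn_univ_inv_formPerm hpath hmem)]

theorem iSup_cycISG_slowCycle (hsd : IsDestabilizer s d) (hpath : (a :: path).Nodup)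
    (hmem : ∀ i, i ∈ a :: path) (hι : 2 ≤ Fintype.card ι) :
    (⨆ j, cycISG (slowCycle s d a path) j) = stabGroup s Set.univ := by
  classical
  refine le_antisymm (iSup_le fun j => ?_)
    ((hsd.cycISG_slowCycle_card_sub_one hpath hmem hι).symm.trans_le (le_iSup _ _))
  obtain rfl | hj := j.eq_zero_or_pos
  · exact bot_le
  · rw [hsd.cycISG_slowCycle hpath hj]
    exact stabGroup_mono (Set.subset_univ _)

end IsDestabilizer

theorem floquet_slow_initialization_general {q : ℕ} {ι : Type*} [Fintype ι]
    {s d : ι → PauliVec q} (hsd : IsDestabilizer s d) (hι : 2 ≤ Fintype.card ι) :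
    ∃ M : List (PauliVec q),
      (⨆ j, cycISG M j) = Submodule.span (ZMod 2) (Set.range s) ∧
      Module.finrank (ZMod 2) ↥(⨆ j, cycISG M j) = Fintype.card ι ∧
      (∀ j, 1 ≤ j → j ≤ Fintype.card ι - 2 →
        Module.finrank (ZMod 2) ↥(cycISG M (j + 1)) =
          Module.finrank (ZMod 2) ↥(cycISG M j) + 1) ∧
      cycISG M (Fintype.card ι - 1) = ⨆ j, cycISG M j ∧
      cycISG M (Fintype.card ι - 2) ≠ ⨆ j, cycISG M j := by
  classical
  obtain ⟨a, path, hlist⟩ : ∃ a path, (Finset.univ : Finset ι).toList = a :: path :=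
    List.exists_cons_of_length_pos (by rw [Finset.length_toList, Finset.card_univ]; lia)
  have hpath : (a :: path).Nodup := hlist ▸ Finset.nodup_toList _
  have hmem (i : ι) : i ∈ a :: path := hlist ▸ Finset.mem_toList.2 (Finset.mem_univ i)
  have hsup := hsd.iSup_cycISG_slowCycle hpath hmem hι
  have hrank := hsd.finrank_stabGroup Set.univ
  rw [Set.ncard_univ, Nat.card_eq_fintype_card] at hrank
  refine ⟨slowCycle s d a path, ?_, ?_, fun j hj hj_le => ?_, ?_, fun hfull => ?_⟩
  · rw [hsup, stabGroup, Set.image_univ]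
  · rw [hsup, hrank]
  · rw [hsd.finrank_cycISG_slowCycle hpath hmem (by lia) (by lia),
      hsd.finrank_cycISG_slowCycle hpath hmem hj (by lia)]
  · rw [hsup, hsd.cycISG_slowCycle_card_sub_one hpath hmem hι]
  · rw [hsup] at hfull
    rw [← hfull] at hrank
    obtain hj | hj := (Fintype.card ι - 2).eq_zero_or_pos
    · rw [hj, cycISG_zero, finrank_bot] at hrank
      lia
    · rw [hsd.finrank_cycISG_slowCycle hpath hmem hj (by lia)] at hrank
      lia

/-- The Pauli `Z` on qubit `i`; a `PauliVec` lists the `X` exponents first. -/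
def pauliZ {q : ℕ} (i : Fin q) : PauliVec q := (0, Pi.single i 1)

/-- The Pauli `X` on qubit `i`. -/
def pauliX {q : ℕ} (i : Fin q) : PauliVec q := (Pi.single i 1, 0)

theorem isDestabilizer_pauliZ_pauliX (q : ℕ) :
    IsDestabilizer (pauliZ : Fin q → PauliVec q) pauliX where
  stabilizer_comm i j := by simp [sympl, pauliZ]
  sympl_self i := by simp [sympl, pauliZ, pauliX, Pi.single_apply]
  sympl_of_ne hij := by simp [sympl, pauliZ, pauliX, Pi.single_apply, hij.symm]

/-- for every `N ≥ 3` there is a Floquet code (a periodic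
measurement sequence on some number of qubits) whose fully initialized
stabilizer group has `N` independent generators and which takes exactly `N - 1`
cycles to initialize: each cycle after the first adds exactly one new
independent stabilizer generator, the code is fully initialized after `N - 1`
cycles, and not earlier. -/
theorem floquet_slow_initialization (N : ℕ) (hN : 3 ≤ N) :
    ∃ (q : ℕ) (M : List (PauliVec q)),
      Module.finrank (ZMod 2) ↥(⨆ j, cycISG M j) = N ∧
      (∀ j, 1 ≤ j → j ≤ N - 2 →
        Module.finrank (ZMod 2) ↥(cycISG M (j + 1)) =
          Module.finrank (ZMod 2) ↥(cycISG M j) + 1) ∧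
      cycISG M (N - 1) = ⨆ j, cycISG M j ∧
      cycISG M (N - 2) ≠ ⨆ j, cycISG M j := by
  obtain ⟨M, -, hM⟩ :=
    floquet_slow_initialization_general (isDestabilizer_pauliZ_pauliX N)
      (by rw [Fintype.card_fin]; lia)
  exact ⟨N, M, by simpa only [Fintype.card_fin] using hM⟩
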